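/- Regard the LSZ partition function Z(J,K) also as a function of the parameter E_p. For every coupling λ ≥ 0, every p ∈ {1,…,N} and all J, K ∈ M_N(ℂ), this dependence is differentiable and the boundary-creation identity ∂Z/∂E_p(J,K) = −(1/N)·Σ_{n=1}^N ∂²Z/∂J_{pn}∂K_{np}(J,K) holds. -/

import Mathlib

open MeasureTheory Matrix

/-- The LSZ action `S(Φ) = Σ_{m,n} (E_n + Ẽ_m)|Φ_{nm}|² + (λ/2)·Tr((Φ*Φ)²)`,
viewed as a complex number. -/
noncomputable def lszAction (N : ℕ) (E Et : Fin N → ℝ) (lam : ℝ)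
    (Φ : Fin N → Fin N → ℂ) : ℂ :=
  (∑ n, ∑ m, (((E n + Et m : ℝ)) : ℂ) * ((Complex.normSq (Φ n m) : ℝ) : ℂ))
    + ((lam / 2 : ℝ) : ℂ) *
      ((((Matrix.of Φ)ᴴ * Matrix.of Φ) * ((Matrix.of Φ)ᴴ * Matrix.of Φ)).trace)

/-- The integrand of the LSZ partition function with sources `J`, `K`. -/
noncomputable def lszIntegrand (N : ℕ) (E Et : Fin N → ℝ) (lam : ℝ)
    (J K : Fin N → Fin N → ℂ) (Φ : Fin N → Fin N → ℂ) : ℂ :=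
  Complex.exp (-(N : ℂ) * lszAction N E Et lam Φ
    + (N : ℂ) * ((∑ m, ∑ n, J n m * (starRingEnd ℂ) (Φ n m))
      + ∑ m, ∑ n, K m n * Φ n m))

/-- The LSZ partition function `Z(J,K)`. -/
noncomputable def lszZ (N : ℕ) (E Et : Fin N → ℝ) (lam : ℝ)
    (J K : Fin N → Fin N → ℂ) : ℂ :=
  ∫ Φ : Fin N → Fin N → ℂ, lszIntegrand N E Et lam J K Φ

/-- The elementary matrix with a single `1` at position `(a,b)`. -/
def eMat (N : ℕ) (a b : Fin N) : Fin N → Fin N → ℂ :=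
  fun i j => if i = a ∧ j = b then 1 else 0

/-- The holomorphic partial derivative `∂/∂J_{ab}` of a function of `(J,K)`. -/
noncomputable def dJ (N : ℕ) (a b : Fin N)
    (f : (Fin N → Fin N → ℂ) → (Fin N → Fin N → ℂ) → ℂ) :
    (Fin N → Fin N → ℂ) → (Fin N → Fin N → ℂ) → ℂ :=
  fun J K => deriv (fun t : ℂ => f (J + t • eMat N a b) K) 0

/-- The holomorphic partial derivative `∂/∂K_{ab}` of a function of `(J,K)`. -/
noncomputable def dK (N : ℕ) (a b : Fin N)
    (f : (Fin N → Fin N → ℂ) → (Fin N → Fin N → ℂ) → ℂ) :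
    (Fin N → Fin N → ℂ) → (Fin N → Fin N → ℂ) → ℂ :=
  fun J K => deriv (fun t : ℂ => f J (K + t • eMat N a b)) 0

/-!
Differentiating `exp (-N S + N (…))` in `E_p` brings down `-N Σ_n |Φ_{pn}|²`, while differentiating
it in `K_{np}` and `J_{pn}` brings down `N Φ_{pn}` and `N conj Φ_{pn}`, whose product is
`N² |Φ_{pn}|²`. So the identity holds under the integral sign. Each of the three derivatives has
the form `d/dt ∫ exp (t h) f` at `t = 0` with `f` of Gaussian decay and `h` of at most quadratic
growth; for small `t` the factor `exp (t h)` costs only part of the Gaussian rate, which leaves an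
integrable dominating function. The integrand itself decays because `Tr ((Φ*Φ)²) ≥ 0` and the
sources are only linear in `Φ`.
-/

section GaussianDecay

open Asymptotics
open scoped Nat

variable {V F : Type*} [NormedAddCommGroup V] [NormedAddCommGroup F] {f : V → F} {h : V → ℂ}

/-- Continuous functions that are `O(exp (-c ‖x‖²))` for some rate `c > 0`, uniformly on the whole
space rather than only at infinity. -/
structure HasGaussianDecay (f : V → F) : Prop where
  continuous : Continuous f
  isBigO : ∃ c > 0, f =O[⊤] fun x => Real.exp (-c * ‖x‖ ^ 2)

/-- Continuous functions that are `O(1 + ‖x‖²)` on the whole space: the exponents that a Gaussian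
can absorb after multiplication by a small parameter. -/
structure HasQuadraticGrowth (h : V → ℂ) : Prop where
  continuous : Continuous h
  isBigO : h =O[⊤] fun x => 1 + ‖x‖ ^ 2

lemma one_add_sq_pow_mul_exp_neg_le {c : ℝ} (hc : 0 < c) (n : ℕ) (r : ℝ) :
    (1 + r ^ 2) ^ n * Real.exp (-c * r ^ 2) ≤ n ! / c ^ n * Real.exp c := by
  have hexp : (c * (1 + r ^ 2)) ^ n / n ! ≤ Real.exp (c * (1 + r ^ 2)) :=
    Real.pow_div_factorial_le_exp _ (by positivity) n
  calc (1 + r ^ 2) ^ n * Real.exp (-c * r ^ 2)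
      = n ! / c ^ n * ((c * (1 + r ^ 2)) ^ n / n !) * Real.exp (-c * r ^ 2) := by
        rw [mul_pow]; field_simp
    _ ≤ n ! / c ^ n * Real.exp (c * (1 + r ^ 2)) * Real.exp (-c * r ^ 2) := by gcongr
    _ = n ! / c ^ n * Real.exp c := by
        rw [mul_assoc, ← Real.exp_add]; ring_nf

lemma integrable_exp_neg_mul_sq_norm [MeasurableSpace V] [BorelSpace V] [SecondCountableTopology V]
    (μ : Measure V) [μ.HasTemperateGrowth] {c : ℝ} (hc : 0 < c) :
    Integrable (fun x => Real.exp (-c * ‖x‖ ^ 2)) μ := by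
  have hpow (n : ℕ) (x : V) : ‖x‖ ^ n * ‖Real.exp (-c * ‖x‖ ^ 2)‖ ≤ n ! / c ^ n * Real.exp c := by
    rw [Real.norm_of_nonneg (Real.exp_pos _).le]
    refine le_trans ?_ (one_add_sq_pow_mul_exp_neg_le hc n ‖x‖)
    gcongr
    nlinarith [sq_nonneg (‖x‖ - 1)]
  have hbdd (x : V) : ‖Real.exp (-c * ‖x‖ ^ 2)‖ ≤ Real.exp c := by simpa using hpow 0 x
  exact (integrable_norm_iff (by fun_prop)).1 <| by
    simpa only [pow_zero, one_mul] using
      integrable_of_le_of_pow_mul_le (μ := μ) (k := 0) hbdd (hpow _)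
        (Continuous.aestronglyMeasurable (by fun_prop))

namespace HasGaussianDecay

lemma integrable [MeasurableSpace V] [BorelSpace V] [SecondCountableTopology V]
    {μ : Measure V} [μ.HasTemperateGrowth] (hf : HasGaussianDecay f) : Integrable f μ := by
  obtain ⟨c, hc, hfc⟩ := hf.isBigO
  obtain ⟨C, hC⟩ := isBigO_top.1 hfc
  exact ((integrable_exp_neg_mul_sq_norm μ hc).norm.const_mul C).mono'
    hf.continuous.aestronglyMeasurable (.of_forall hC)

lemma cexp_of_re_le {g : V → ℂ} (hg : Continuous g) {a b : ℝ} (ha : 0 < a)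
    (hre : ∀ x, (g x).re ≤ b * ‖x‖ - a * ‖x‖ ^ 2) :
    HasGaussianDecay fun x => Complex.exp (g x) := by
  refine ⟨hg.cexp, a / 2, half_pos ha, isBigO_top.2 ⟨Real.exp (b ^ 2 / (2 * a)), fun x => ?_⟩⟩
  rw [Complex.norm_exp, Real.norm_of_nonneg (Real.exp_pos _).le, ← Real.exp_add, Real.exp_le_exp]
  have hsquare : b ^ 2 / (2 * a) + -(a / 2) * ‖x‖ ^ 2 - (b * ‖x‖ - a * ‖x‖ ^ 2)
      = (b - a * ‖x‖) ^ 2 / (2 * a) := by field_simp; ring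
  have hnonneg : 0 ≤ (b - a * ‖x‖) ^ 2 / (2 * a) := by positivity
  linarith [hre x]

variable [NormedSpace ℂ F]

lemma smul (hf : HasGaussianDecay f) (hh : HasQuadraticGrowth h) :
    HasGaussianDecay fun x => h x • f x := by
  obtain ⟨c, hc, hfc⟩ := hf.isBigO
  refine ⟨hh.continuous.smul hf.continuous, c / 2, half_pos hc, ?_⟩
  refine (hh.isBigO.smul hfc).trans
    (isBigO_top.2 ⟨1 ! / (c / 2) ^ 1 * Real.exp (c / 2), fun x => ?_⟩)
  have hhalf := one_add_sq_pow_mul_exp_neg_le (half_pos hc) 1 ‖x‖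
  rw [Real.norm_of_nonneg (by positivity), Real.norm_of_nonneg (by positivity), smul_eq_mul]
  calc (1 + ‖x‖ ^ 2) * Real.exp (-c * ‖x‖ ^ 2)
      = (1 + ‖x‖ ^ 2) ^ 1 * Real.exp (-(c / 2) * ‖x‖ ^ 2) * Real.exp (-(c / 2) * ‖x‖ ^ 2) := by
        rw [pow_one, mul_assoc, ← Real.exp_add]; ring_nf
    _ ≤ _ := by gcongr

lemma exists_norm_cexp_mul_smul_le (hf : HasGaussianDecay f) (hh : HasQuadraticGrowth h) :
    ∃ δ > 0, ∃ C, ∃ c > 0, ∀ t : ℂ, ‖t‖ < δ → ∀ x,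
      ‖Complex.exp (t * h x) • f x‖ ≤ C * Real.exp (-c * ‖x‖ ^ 2) := by
  obtain ⟨c, hc, hfc⟩ := hf.isBigO
  obtain ⟨C, hfC⟩ := isBigO_top.1 hfc
  obtain ⟨D, hD, hhD⟩ := hh.isBigO.exists_pos
  rw [isBigOWith_top] at hhD
  refine ⟨c / (2 * D), by positivity, Real.exp (c / 2) * C, c / 2, half_pos hc, fun t ht x => ?_⟩
  have hre : (t * h x).re ≤ c / 2 * (1 + ‖x‖ ^ 2) :=
    calc (t * h x).re ≤ ‖t‖ * ‖h x‖ := norm_mul t (h x) ▸ Complex.re_le_norm _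
      _ ≤ c / (2 * D) * (D * ‖1 + ‖x‖ ^ 2‖) := by gcongr; exact hhD x
      _ = c / 2 * (1 + ‖x‖ ^ 2) := by rw [Real.norm_of_nonneg (by positivity)]; field_simp
  calc ‖Complex.exp (t * h x) • f x‖ = Real.exp (t * h x).re * ‖f x‖ := by
        rw [norm_smul, Complex.norm_exp]
    _ ≤ Real.exp (c / 2 * (1 + ‖x‖ ^ 2)) * (C * Real.exp (-c * ‖x‖ ^ 2)) := by
        gcongr
        simpa only [Real.norm_of_nonneg (Real.exp_pos _).le] using hfC x
    _ = Real.exp (c / 2) * C * Real.exp (-(c / 2) * ‖x‖ ^ 2) := by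
        rw [mul_left_comm, ← Real.exp_add, mul_comm (Real.exp (c / 2)), mul_assoc, ← Real.exp_add]
        ring_nf

theorem hasDerivAt_integral_cexp_mul_smul [MeasurableSpace V] [BorelSpace V]
    [SecondCountableTopology V] {μ : Measure V} [μ.HasTemperateGrowth]
    (hf : HasGaussianDecay f) (hh : HasQuadraticGrowth h) :
    HasDerivAt (fun t : ℂ => ∫ x, Complex.exp (t * h x) • f x ∂μ) (∫ x, h x • f x ∂μ) 0 := by
  have hfcont := hf.continuous
  have hhcont := hh.continuous
  obtain ⟨δ, hδ, C, c, hc, hbound⟩ := (hf.smul hh).exists_norm_cexp_mul_smul_le hh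
  have hderiv (x : V) (t : ℂ) : HasDerivAt (fun t => Complex.exp (t * h x) • f x)
      (Complex.exp (t * h x) • h x • f x) t := by
    simpa only [one_mul, mul_smul] using
      ((hasDerivAt_id' t).mul_const (h x)).cexp.smul_const (f x)
  simpa only [zero_mul, Complex.exp_zero, one_smul] using
    (hasDerivAt_integral_of_dominated_loc_of_deriv_le (Metric.ball_mem_nhds 0 hδ)
      (.of_forall fun t => Continuous.aestronglyMeasurable (by fun_prop))
      (by simpa using hf.integrable)
      (Continuous.aestronglyMeasurable (by fun_prop))
      (.of_forall fun x t ht => hbound t (mem_ball_zero_iff.1 ht) x)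
      ((integrable_exp_neg_mul_sq_norm μ hc).const_mul C)
      (.of_forall fun x t _ => hderiv x t)).2

end HasGaussianDecay

namespace HasQuadraticGrowth

lemma of_isBigO_id (hcont : Continuous h) (hO : h =O[⊤] fun x => x) : HasQuadraticGrowth h where
  continuous := hcont
  isBigO := hO.trans <| isBigO_top.2 ⟨1, fun x => by
    rw [Real.norm_of_nonneg (by positivity)]
    nlinarith [sq_nonneg (‖x‖ - 1)]⟩

lemma of_isBigO_norm_sq (hcont : Continuous h) (hO : h =O[⊤] fun x => ‖x‖ ^ 2) :
    HasQuadraticGrowth h where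
  continuous := hcont
  isBigO := hO.trans <| isBigO_top.2 ⟨1, fun x => by
    rw [Real.norm_of_nonneg (by positivity), Real.norm_of_nonneg (by positivity)]
    linarith⟩

end HasQuadraticGrowth

end GaussianDecay

section Entries

open Asymptotics

lemma sq_norm_le_sum_sq_norm {ι : Type*} [Fintype ι] {G : ι → Type*}
    [∀ i, SeminormedAddCommGroup (G i)] (x : ∀ i, G i) : ‖x‖ ^ 2 ≤ ∑ i, ‖x i‖ ^ 2 := by
  have hsum : 0 ≤ ∑ i, ‖x i‖ ^ 2 := by positivity
  refine (Real.le_sqrt (norm_nonneg x) hsum).1 <| (pi_norm_le_iff_of_nonneg (by positivity)).2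
    fun i => Real.le_sqrt_of_sq_le ?_
  exact Finset.single_le_sum (f := fun i => ‖x i‖ ^ 2) (fun _ _ => by positivity)
    (Finset.mem_univ i)

variable {m n : Type*} [Fintype m] [Fintype n]

lemma norm_entry_le_norm {G : Type*} [SeminormedAddCommGroup G] (Φ : m → n → G) (i : m) (j : n) :
    ‖Φ i j‖ ≤ ‖Φ‖ :=
  (norm_le_pi_norm (Φ i) j).trans (norm_le_pi_norm Φ i)

lemma sq_norm_le_sum_sum_sq_norm {G : Type*} [SeminormedAddCommGroup G] (Φ : m → n → G) :
    ‖Φ‖ ^ 2 ≤ ∑ i, ∑ j, ‖Φ i j‖ ^ 2 :=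
  (sq_norm_le_sum_sq_norm Φ).trans <| Finset.sum_le_sum fun i _ => sq_norm_le_sum_sq_norm (Φ i)

lemma isBigO_entry {G : Type*} [SeminormedAddCommGroup G] (i : m) (j : n) :
    (fun Φ : m → n → G => Φ i j) =O[⊤] fun Φ => Φ :=
  isBigO_top.2 ⟨1, fun Φ => by simpa using norm_entry_le_norm Φ i j⟩

lemma hasQuadraticGrowth_const_mul_entry (c : ℂ) (i : m) (j : n) :
    HasQuadraticGrowth fun Φ : m → n → ℂ => c * Φ i j :=
  .of_isBigO_id (by fun_prop) ((isBigO_entry i j).const_mul_left c)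

lemma hasQuadraticGrowth_const_mul_conj_entry (c : ℂ) (i : m) (j : n) :
    HasQuadraticGrowth fun Φ : m → n → ℂ => c * (starRingEnd ℂ) (Φ i j) :=
  .of_isBigO_id (continuous_const.mul (Complex.continuous_conj.comp (by fun_prop))) <|
    .const_mul_left (.of_norm_left <| by
      simpa only [RCLike.norm_conj] using (isBigO_entry i j).norm_left) c

lemma hasQuadraticGrowth_const_mul_sum_normSq_row (c : ℂ) (i : m) :
    HasQuadraticGrowth fun Φ : m → n → ℂ => c * ∑ j, (Complex.normSq (Φ i j) : ℂ) := by
  simp only [Complex.normSq_eq_norm_sq]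
  refine .of_isBigO_norm_sq (by fun_prop) (.const_mul_left (.fun_sum fun j _ => ?_) c)
  exact .of_norm_left <| by simpa using ((isBigO_entry i j).norm_norm.pow 2)

-- Instance search does not find this through the nested product.
instance isAddHaarMeasure_volume_entries : (volume : Measure (m → n → ℂ)).IsAddHaarMeasure :=
  Measure.pi.isAddHaarMeasure _

lemma trace_conjTranspose_mul_self_sq_nonneg {R : Type*} [CommRing R] [PartialOrder R] [StarRing R]
    [StarOrderedRing R] (A : Matrix m n R) : 0 ≤ ((Aᴴ * A) * (Aᴴ * A)).trace := by
  simpa only [conjTranspose_mul, conjTranspose_conjTranspose] using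
    (posSemidef_conjTranspose_mul_self (Aᴴ * A)).trace_nonneg

end Entries

section LSZ

open scoped ComplexOrder

variable {N : ℕ} {E Et : Fin N → ℝ} {lam : ℝ}

lemma mul_sq_norm_le_re_lszAction {c : ℝ} (hc : 0 ≤ c) (hE : ∀ n m, c ≤ E n + Et m)
    (hlam : 0 ≤ lam) (Φ : Fin N → Fin N → ℂ) : c * ‖Φ‖ ^ 2 ≤ (lszAction N E Et lam Φ).re := by
  have hquartic := (Complex.le_def.1 (trace_conjTranspose_mul_self_sq_nonneg (Matrix.of Φ))).1
  have hquadratic : c * ‖Φ‖ ^ 2 ≤ ∑ n, ∑ m, (E n + Et m) * Complex.normSq (Φ n m) :=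
    calc c * ‖Φ‖ ^ 2 ≤ c * ∑ n, ∑ m, ‖Φ n m‖ ^ 2 := by
          gcongr; exact sq_norm_le_sum_sum_sq_norm Φ
      _ ≤ ∑ n, ∑ m, (E n + Et m) * Complex.normSq (Φ n m) := by
          simp only [Finset.mul_sum, Complex.normSq_eq_norm_sq]
          gcongr with n _ m _
          exact hE n m
  simp only [lszAction, Complex.add_re, Complex.re_ofReal_mul, Complex.re_sum, Complex.ofReal_re]
  exact hquadratic.trans (le_add_of_nonneg_right (mul_nonneg (by positivity) hquartic))

lemma norm_sources_le (J K Φ : Fin N → Fin N → ℂ) :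
    ‖(∑ m, ∑ n, J n m * (starRingEnd ℂ) (Φ n m)) + ∑ m, ∑ n, K m n * Φ n m‖
      ≤ ((∑ m, ∑ n, ‖J n m‖) + ∑ m, ∑ n, ‖K m n‖) * ‖Φ‖ := by
  simp only [add_mul, Finset.sum_mul]
  refine norm_add_le_of_le ?_ ?_ <;>
    refine norm_sum_le_of_le _ fun m _ => norm_sum_le_of_le _ fun n _ => ?_
  · rw [norm_mul, RCLike.norm_conj]
    gcongr
    exact norm_entry_le_norm Φ n m
  · rw [norm_mul]
    gcongr
    exact norm_entry_le_norm Φ n m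

lemma continuous_lszAction : Continuous (lszAction N E Et lam) := by
  unfold lszAction
  simp only [Complex.normSq_eq_norm_sq, Matrix.trace, Matrix.diag_apply, Matrix.mul_apply,
    conjTranspose_apply, Matrix.of_apply]
  fun_prop

lemma hasGaussianDecay_lszIntegrand (hN : 0 < N) (hE : ∀ n m, 0 < E n + Et m) (hlam : 0 ≤ lam)
    (J K : Fin N → Fin N → ℂ) : HasGaussianDecay (lszIntegrand N E Et lam J K) := by
  have : Nonempty (Fin N) := ⟨⟨0, hN⟩⟩
  obtain ⟨⟨n₀, m₀⟩, hmin⟩ := Finite.exists_min fun i : Fin N × Fin N => E i.1 + Et i.2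
  have hcont : Continuous (lszAction N E Et lam) := continuous_lszAction
  refine .cexp_of_re_le (a := N * (E n₀ + Et m₀))
    (b := N * ((∑ m, ∑ n, ‖J n m‖) + ∑ m, ∑ n, ‖K m n‖)) (by fun_prop)
    (mul_pos (by positivity) (hE n₀ m₀)) fun Φ => ?_
  have haction := mul_sq_norm_le_re_lszAction (hE n₀ m₀).le (fun n m => hmin (n, m)) hlam Φ
  have hsources := (Complex.re_le_norm _).trans (norm_sources_le J K Φ)
  rw [neg_mul, neg_add_eq_sub, ← mul_sub, ← Complex.ofReal_natCast, Complex.re_ofReal_mul,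
    Complex.sub_re, mul_assoc, mul_assoc, ← mul_sub]
  gcongr

lemma sum_eMat_mul (a b : Fin N) (x : Fin N → Fin N → ℂ) :
    ∑ i, ∑ j, eMat N a b i j * x i j = x a b := by
  simp [eMat, ite_and]

lemma lszIntegrand_add_smul_eMat_left (J K Φ : Fin N → Fin N → ℂ) (a b : Fin N) (t : ℂ) :
    lszIntegrand N E Et lam (J + t • eMat N a b) K Φ
      = Complex.exp (t * (N * (starRingEnd ℂ) (Φ a b))) * lszIntegrand N E Et lam J K Φ := by
  have hsource : ∑ m, ∑ n, (J + t • eMat N a b) n m * (starRingEnd ℂ) (Φ n m)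
      = (∑ m, ∑ n, J n m * (starRingEnd ℂ) (Φ n m)) + t * (starRingEnd ℂ) (Φ a b) := by
    rw [← sum_eMat_mul a b fun i j => (starRingEnd ℂ) (Φ i j),
      Finset.sum_comm (f := fun i j => eMat N a b i j * _)]
    simp only [Finset.mul_sum, ← Finset.sum_add_distrib, Pi.add_apply, Pi.smul_apply, smul_eq_mul,
      add_mul, mul_assoc]
  rw [lszIntegrand, hsource, lszIntegrand, ← Complex.exp_add]
  ring_nf

lemma lszIntegrand_add_smul_eMat_right (J K Φ : Fin N → Fin N → ℂ) (a b : Fin N) (t : ℂ) :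
    lszIntegrand N E Et lam J (K + t • eMat N a b) Φ
      = Complex.exp (t * (N * Φ b a)) * lszIntegrand N E Et lam J K Φ := by
  have hsource : ∑ m, ∑ n, (K + t • eMat N a b) m n * Φ n m
      = (∑ m, ∑ n, K m n * Φ n m) + t * Φ b a := by
    rw [← sum_eMat_mul a b fun i j => Φ j i]
    simp only [Finset.mul_sum, ← Finset.sum_add_distrib, Pi.add_apply, Pi.smul_apply, smul_eq_mul,
      add_mul, mul_assoc]
  rw [lszIntegrand, hsource, lszIntegrand, ← Complex.exp_add]
  ring_nf

lemma lszAction_update (Φ : Fin N → Fin N → ℂ) (p : Fin N) (s : ℝ) :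
    lszAction N (Function.update E p s) Et lam Φ
      = lszAction N E Et lam Φ + (s - E p) * ∑ m, (Complex.normSq (Φ p m) : ℂ) := by
  have hrow (E : Fin N → ℝ) := Finset.add_sum_erase Finset.univ
    (fun n => ∑ m, ((E n + Et m : ℝ) : ℂ) * (Complex.normSq (Φ n m) : ℂ)) (Finset.mem_univ p)
  have hrest : ∑ n ∈ Finset.univ.erase p,
        ∑ m, ((Function.update E p s n + Et m : ℝ) : ℂ) * (Complex.normSq (Φ n m) : ℂ)
      = ∑ n ∈ Finset.univ.erase p, ∑ m, ((E n + Et m : ℝ) : ℂ) * (Complex.normSq (Φ n m) : ℂ) :=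
    Finset.sum_congr rfl fun n hn => by rw [Function.update_of_ne (Finset.ne_of_mem_erase hn)]
  rw [lszAction, lszAction, ← hrow, ← hrow E, hrest, Function.update_self]
  simp only [Complex.ofReal_add, add_mul, Finset.sum_add_distrib, ← Finset.mul_sum]
  ring

lemma lszIntegrand_update (J K Φ : Fin N → Fin N → ℂ) (p : Fin N) (s : ℝ) :
    lszIntegrand N (Function.update E p s) Et lam J K Φ
      = Complex.exp ((s - E p) * (-N * ∑ m, (Complex.normSq (Φ p m) : ℂ)))
        * lszIntegrand N E Et lam J K Φ := by
  rw [lszIntegrand, lszAction_update, lszIntegrand, ← Complex.exp_add]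
  ring_nf

lemma hasDerivAt_lszZ_update (hE : ∀ n m, 0 < E n + Et m) (hlam : 0 ≤ lam) (p : Fin N)
    (J K : Fin N → Fin N → ℂ) :
    HasDerivAt (fun s : ℝ => lszZ N (Function.update E p s) Et lam J K)
      (∫ Φ, (-N * ∑ m, (Complex.normSq (Φ p m) : ℂ)) * lszIntegrand N E Et lam J K Φ) (E p) := by
  simp only [lszZ, lszIntegrand_update]
  have hderiv := (hasGaussianDecay_lszIntegrand p.pos hE hlam J K).hasDerivAt_integral_cexp_mul_smul
    (μ := volume) (hasQuadraticGrowth_const_mul_sum_normSq_row (-N) p)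
  rw [← sub_self (E p : ℂ)] at hderiv
  exact (hderiv.comp_sub_const (E p : ℂ) (E p)).comp_ofReal

lemma dK_lszZ (hE : ∀ n m, 0 < E n + Et m) (hlam : 0 ≤ lam) (a b : Fin N)
    (J K : Fin N → Fin N → ℂ) :
    dK N a b (lszZ N E Et lam) J K = ∫ Φ, N * Φ b a * lszIntegrand N E Et lam J K Φ := by
  simp only [dK, lszZ, lszIntegrand_add_smul_eMat_right]
  exact ((hasGaussianDecay_lszIntegrand a.pos hE hlam J K).hasDerivAt_integral_cexp_mul_smul
    (hasQuadraticGrowth_const_mul_entry N b a)).deriv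

lemma dJ_dK_lszZ (hE : ∀ n m, 0 < E n + Et m) (hlam : 0 ≤ lam) (a b c d : Fin N)
    (J K : Fin N → Fin N → ℂ) :
    dJ N a b (dK N c d (lszZ N E Et lam)) J K
      = ∫ Φ, N * (starRingEnd ℂ) (Φ a b) * (N * Φ d c * lszIntegrand N E Et lam J K Φ) := by
  simp only [dJ, dK_lszZ hE hlam, lszIntegrand_add_smul_eMat_left, mul_left_comm _ (Complex.exp _)]
  exact (((hasGaussianDecay_lszIntegrand a.pos hE hlam J K).smul
    (hasQuadraticGrowth_const_mul_entry N d c)).hasDerivAt_integral_cexp_mul_smul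
    (hasQuadraticGrowth_const_mul_conj_entry N a b)).deriv

lemma integrable_conj_entry_mul_entry_mul_lszIntegrand (hE : ∀ n m, 0 < E n + Et m)
    (hlam : 0 ≤ lam) (a b c d : Fin N) (J K : Fin N → Fin N → ℂ) :
    Integrable fun Φ : Fin N → Fin N → ℂ =>
      N * (starRingEnd ℂ) (Φ a b) * (N * Φ d c * lszIntegrand N E Et lam J K Φ) :=
  (((hasGaussianDecay_lszIntegrand a.pos hE hlam J K).smul
    (hasQuadraticGrowth_const_mul_entry N d c)).smul
    (hasQuadraticGrowth_const_mul_conj_entry N a b)).integrable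

theorem lsz_boundary_creation_general (hE : ∀ n m, 0 < E n + Et m) (hlam : 0 ≤ lam) (p : Fin N)
    (J K : Fin N → Fin N → ℂ) :
    HasDerivAt (fun s : ℝ => lszZ N (Function.update E p s) Et lam J K)
      (-(1 / (N : ℂ)) * ∑ n, dJ N p n (dK N n p (lszZ N E Et lam)) J K) (E p) := by
  have hN : (N : ℂ) ≠ 0 := Nat.cast_ne_zero.2 p.pos.ne'
  refine (hasDerivAt_lszZ_update hE hlam p J K).congr_deriv ?_
  simp only [dJ_dK_lszZ hE hlam]
  rw [← integral_finsetSum _ fun n _ =>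
      integrable_conj_entry_mul_entry_mul_lszIntegrand hE hlam p n n p J K, ← integral_const_mul]
  congr with Φ
  simp only [Complex.normSq_eq_conj_mul_self, Finset.mul_sum, Finset.sum_mul]
  refine Finset.sum_congr rfl fun n _ => ?_
  field_simp

end LSZ

/-- Boundary creation identity: regarding `Z(J,K)` as a function of the
parameter `E_p`, this dependence is differentiable and
`∂Z/∂E_p = −(1/N)·Σ_n ∂²Z/∂J_{pn}∂K_{np}`. -/
theorem lsz_boundary_creation
    (N : ℕ) (hN : 1 ≤ N) (E Et : Fin N → ℝ)
    (hE : ∀ n, 0 < E n) (hEt : ∀ n, 0 < Et n) (lam : ℝ) (hlam : 0 ≤ lam)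
    (p : Fin N) (J K : Fin N → Fin N → ℂ) :
    HasDerivAt (fun s : ℝ => lszZ N (Function.update E p s) Et lam J K)
      (-(1 / (N : ℂ)) * ∑ n, dJ N p n (dK N n p (lszZ N E Et lam)) J K) (E p) :=
  lsz_boundary_creation_general (fun n m => add_pos (hE n) (hEt m)) hlam p J K
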